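/- Let 0 ≤ k < d be integers and let {x_u : u ∈ {0,1}^k} and {y_w : w ∈ {0,1,2}^k} be families of non-negative real numbers such that y_{u+v} ≥ x_u + x_v for all u, v ∈ {0,1}^k, and such that x_u ≥ x_v whenever v_i ≥ u_i for all i. Then Σ_{w ∈ {0,1,2}^k} y_w^{d−k} ≥ Σ_{s=0}^{k} D_s X_s. -/

import Mathlib

/-!
For `w ∈ {0,1,2}^k` let `lo w = ⌊w / 2⌋` be the indicator of `{i | w i = 2}` and `hi w = min w 1`
the indicator of `{i | w i ≥ 1}`. Then `w = lo w + hi w` and `lo w ≤ hi w`, so with `n = d - k`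
`y_w ^ n ≥ (x_{lo w} + x_{hi w}) ^ n ≥ x_{lo w} ^ n + (2 ^ n - 1) x_{hi w} ^ n`,
where the second step (`pow_add_ge`) uses `x_{lo w} ≥ x_{hi w} ≥ 0`. Summing over `w` gives exactly
the right-hand side, because `u ∈ {0,1}^k` equals `lo w` for `2 ^ (k - |u|)` vectors `w` and equals
`hi w` for `2 ^ |u|` vectors `w` (`sum_comp_lo`, `sum_comp_hi`).
-/

/-- The set `{0,1,…,n-1}^k` as a finset of functions `Fin k → ℕ`. -/
def cube (k n : ℕ) : Finset (Fin k → ℕ) :=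
  Fintype.piFinset fun _ => Finset.range n

/-- `D_s = 2^{k-s} + (2^{d-k} - 1) 2^s`. -/
noncomputable def Dcoef (d k s : ℕ) : ℝ :=
  2 ^ (k - s) + (2 ^ (d - k) - 1) * 2 ^ s

/-- `X_s = ∑_{u ∈ {0,1}^k, |u| = s} x_u^{d-k}`. -/
noncomputable def Xsum (d k : ℕ) (x : (Fin k → ℕ) → ℝ) (s : ℕ) : ℝ :=
  ∑ u ∈ (cube k 2).filter (fun u => ∑ i, u i = s), x u ^ (d - k)

lemma pow_add_ge {a b : ℝ} (hb : 0 ≤ b) (hab : b ≤ a) (n : ℕ) :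
    a ^ n + (2 ^ n - 1) * b ^ n ≤ (a + b) ^ n := by
  induction n with
  | zero => simp
  | succ n ih =>
    have h1 : b ^ n ≤ a ^ n := pow_le_pow_left₀ hb hab n
    have h2 : (0 : ℝ) ≤ 2 ^ n - 1 := by
      have := one_le_pow₀ (n := n) (one_le_two (α := ℝ))
      linarith
    have h3 : 0 ≤ (2 ^ n - 1) * b ^ n * (a - b) :=
      mul_nonneg (mul_nonneg h2 (pow_nonneg hb n)) (sub_nonneg.2 hab)
    have h4 : 0 ≤ b * (a ^ n - b ^ n) := mul_nonneg hb (sub_nonneg.2 h1)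
    have h5 := mul_le_mul_of_nonneg_right ih (by linarith : 0 ≤ a + b)
    calc a ^ (n + 1) + (2 ^ (n + 1) - 1) * b ^ (n + 1)
        ≤ (a ^ n + (2 ^ n - 1) * b ^ n) * (a + b) := by
          simp only [pow_succ]
          nlinarith
      _ ≤ (a + b) ^ (n + 1) := by rw [pow_succ (a + b)]; exact h5

lemma mem_cube {k n : ℕ} {w : Fin k → ℕ} : w ∈ cube k n ↔ ∀ i, w i < n := by
  simp [cube]

/-- Summation over `w ∈ {0,1,2}^k` of `f (g ∘ w)`, where the coordinate map
`g : {0,1,2} → {0,1}` has fibres of sizes `2 ^ c 0` and `2 ^ c 1`. -/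
lemma sum_comp_coord {k : ℕ} (g c : ℕ → ℕ) (hg : ∀ a < 3, g a < 2)
    (hc : ∀ b < 2, ((Finset.range 3).filter fun a => g a = b).card = 2 ^ c b)
    (f : (Fin k → ℕ) → ℝ) :
    ∑ w ∈ cube k 3, f (fun i => g (w i)) = ∑ u ∈ cube k 2, 2 ^ (∑ i, c (u i)) * f u := by
  have hmaps : ∀ w ∈ cube k 3, (fun i => g (w i)) ∈ cube k 2 := fun w hw =>
    mem_cube.2 fun i => hg _ (mem_cube.1 hw i)
  rw [← Finset.sum_fiberwise_of_maps_to hmaps]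
  refine Finset.sum_congr rfl fun u hu => ?_
  have hfib : (cube k 3).filter (fun w => (fun i => g (w i)) = u) =
      Fintype.piFinset fun i => (Finset.range 3).filter fun a => g a = u i := by
    ext w
    simp [cube, funext_iff, forall_and]
  have hcard : ((cube k 3).filter (fun w => (fun i => g (w i)) = u)).card =
      2 ^ (∑ i, c (u i)) := by
    rw [hfib, Fintype.card_piFinset, ← Finset.prod_pow_eq_pow_sum]
    exact Finset.prod_congr rfl fun i _ => hc _ (mem_cube.1 hu i)
  rw [Finset.sum_congr rfl (g := fun _ => f u)
    (fun w hw => by rw [(Finset.mem_filter.1 hw).2]), Finset.sum_const, hcard]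
  simp

lemma sum_comp_lo {k : ℕ} (f : (Fin k → ℕ) → ℝ) :
    ∑ w ∈ cube k 3, f (fun i => w i / 2) = ∑ u ∈ cube k 2, 2 ^ (k - ∑ i, u i) * f u := by
  rw [sum_comp_coord (fun a => a / 2) (fun b => 1 - b) (by omega) (by decide)]
  refine Finset.sum_congr rfl fun u hu => ?_
  have h : ∑ i, (1 - u i) + ∑ i, u i = k := by
    rw [← Finset.sum_add_distrib, Finset.sum_congr rfl (g := fun _ => 1)
      (fun i _ => by have := mem_cube.1 hu i; omega)]
    simp
  rw [Nat.eq_sub_of_add_eq h]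

lemma sum_comp_hi {k : ℕ} (f : (Fin k → ℕ) → ℝ) :
    ∑ w ∈ cube k 3, f (fun i => min (w i) 1) = ∑ u ∈ cube k 2, 2 ^ (∑ i, u i) * f u :=
  sum_comp_coord (fun a => min a 1) (fun b => b) (by omega) (by decide) f

lemma sum_Dcoef_mul_Xsum (d k : ℕ) (x : (Fin k → ℕ) → ℝ) :
    ∑ s ∈ Finset.range (k + 1), Dcoef d k s * Xsum d k x s =
      ∑ u ∈ cube k 2, Dcoef d k (∑ i, u i) * x u ^ (d - k) := by
  have hmaps : ∀ u ∈ cube k 2, ∑ i, u i ∈ Finset.range (k + 1) := fun u hu => by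
    have h : ∑ i, u i ≤ ∑ _i : Fin k, 1 :=
      Finset.sum_le_sum fun i _ => Nat.lt_succ_iff.1 (mem_cube.1 hu i)
    simp only [Finset.sum_const, Finset.card_univ, Fintype.card_fin, smul_eq_mul, mul_one] at h
    exact Finset.mem_range.2 (Nat.lt_succ_of_le h)
  rw [← Finset.sum_fiberwise_of_maps_to hmaps]
  refine Finset.sum_congr rfl fun s _ => ?_
  rw [Xsum, Finset.mul_sum]
  exact Finset.sum_congr rfl fun u hu => by rw [(Finset.mem_filter.1 hu).2]

/-- The Strong Inequality (SI): `∑_{w ∈ {0,1,2}^k} y_w^{d-k} ≥ ∑_{s=0}^k D_s X_s`. -/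
theorem stmt5 (d k : ℕ) (hkd : k < d)
    (x y : (Fin k → ℕ) → ℝ)
    (hx : ∀ u, (∀ i, u i ≤ 1) → 0 ≤ x u)
    (hy : ∀ w, (∀ i, w i ≤ 2) → 0 ≤ y w)
    (hadd : ∀ u v : Fin k → ℕ, (∀ i, u i ≤ 1) → (∀ i, v i ≤ 1) →
      x u + x v ≤ y (u + v))
    (hmono : ∀ u v : Fin k → ℕ, (∀ i, u i ≤ 1) → (∀ i, v i ≤ 1) →
      (∀ i, u i ≤ v i) → x v ≤ x u) :
    ∑ w ∈ cube k 3, y w ^ (d - k) ≥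
      ∑ s ∈ Finset.range (k + 1), Dcoef d k s * Xsum d k x s := by
  calc ∑ s ∈ Finset.range (k + 1), Dcoef d k s * Xsum d k x s
      = ∑ w ∈ cube k 3, (x (fun i => w i / 2) ^ (d - k) +
          (2 ^ (d - k) - 1) * x (fun i => min (w i) 1) ^ (d - k)) := by
        rw [Finset.sum_add_distrib, ← Finset.mul_sum, sum_comp_lo (fun u => x u ^ (d - k)),
          sum_comp_hi (fun u => x u ^ (d - k)), Finset.mul_sum, ← Finset.sum_add_distrib,
          sum_Dcoef_mul_Xsum]
        refine Finset.sum_congr rfl fun u _ => ?_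
        rw [Dcoef]
        ring
    _ ≤ ∑ w ∈ cube k 3, y w ^ (d - k) := by
        refine Finset.sum_le_sum fun w hw => ?_
        have hw3 := mem_cube.1 hw
        have hlo : ∀ i, w i / 2 ≤ 1 := fun i => by have := hw3 i; omega
        have hhi : ∀ i, min (w i) 1 ≤ 1 := fun i => min_le_right _ _
        have hle : ∀ i, w i / 2 ≤ min (w i) 1 := fun i => by have := hw3 i; omega
        have hsum : (fun i => w i / 2) + (fun i => min (w i) 1) = w := by
          funext i
          have := hw3 i
          simp only [Pi.add_apply]
          omega
        have h := hadd _ _ hlo hhi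
        rw [hsum] at h
        exact (pow_add_ge (hx _ hhi) (hmono _ _ hlo hhi hle) _).trans
          (pow_le_pow_left₀ (add_nonneg (hx _ hlo) (hx _ hhi)) h _)
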